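/- Let A be a symmetric real 7×7 matrix and define the algebraic curvature tensor R_{ijkl} = Σ_{n,m} A_{nm} φ_{nij} φ_{mkl} (an element of Sym²(Ω²₇)). Then for all j,k its Ricci contraction satisfies Σ_i R_{ijki} = A_{jk} − tr(A) δ_{jk}. Consequently, if Σ_i R_{ijki} = 0 for all j,k, then A = 0 and hence R_{ijkl} = 0 for all indices: a curvature tensor in Sym²(Ω²₇) with vanishing Ricci contraction is identically zero. -/

import Mathlib

open Finset

noncomputable section

def phi0 : Fin 7 → Fin 7 → Fin 7 → ℝ := fun i j k =>
  if (i, j, k) = (0, 1, 2) then -1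
  else if (i, j, k) = (0, 3, 4) then -1
  else if (i, j, k) = (0, 5, 6) then -1
  else if (i, j, k) = (1, 3, 5) then -1
  else if (i, j, k) = (1, 4, 6) then 1
  else if (i, j, k) = (2, 3, 6) then 1
  else if (i, j, k) = (2, 4, 5) then 1
  else 0

/-- The standard G₂ 3-form on ℝ⁷ (paper's orientation convention), as a totally
antisymmetric array with `φ₁₂₃ = φ₁₄₅ = φ₁₆₇ = φ₂₄₆ = −1`, `φ₂₅₇ = φ₃₄₇ = φ₃₅₆ = 1`
(indices shifted to start at 0). -/
def phi (i j k : Fin 7) : ℝ :=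
  ∑ σ : Equiv.Perm (Fin 3),
    ((Equiv.Perm.sign σ : ℤ) : ℝ) *
      phi0 (![i, j, k] (σ 0)) (![i, j, k] (σ 1)) (![i, j, k] (σ 2))

def psi0 : Fin 7 → Fin 7 → Fin 7 → Fin 7 → ℝ := fun i j k l =>
  if (i, j, k, l) = (0, 1, 3, 6) then 1
  else if (i, j, k, l) = (0, 1, 4, 5) then 1
  else if (i, j, k, l) = (0, 2, 3, 5) then 1
  else if (i, j, k, l) = (0, 2, 4, 6) then -1
  else if (i, j, k, l) = (1, 2, 3, 4) then -1
  else if (i, j, k, l) = (1, 2, 5, 6) then -1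
  else if (i, j, k, l) = (3, 4, 5, 6) then -1
  else 0

/-- The dual 4-form ψ = ∗φ of the standard G₂-structure, as a totally antisymmetric
array with `ψ₁₂₄₇ = ψ₁₂₅₆ = ψ₁₃₄₆ = 1`, `ψ₁₃₅₇ = ψ₂₃₄₅ = ψ₂₃₆₇ = ψ₄₅₆₇ = −1`
(indices shifted to start at 0). -/
def psi (i j k l : Fin 7) : ℝ :=
  ∑ σ : Equiv.Perm (Fin 4),
    ((Equiv.Perm.sign σ : ℤ) : ℝ) *
      psi0 (![i, j, k, l] (σ 0)) (![i, j, k, l] (σ 1)) (![i, j, k, l] (σ 2))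
        (![i, j, k, l] (σ 3))

/-- Kronecker delta. -/
def kdelta (i j : Fin 7) : ℝ := if i = j then 1 else 0

/-- The G₂ cross product on ℝ⁷: `(u × v)_k = Σ_{i,j} φ_{ijk} u_i v_j`. -/
def cross (u v : Fin 7 → ℝ) : Fin 7 → ℝ := fun k =>
  ∑ i, ∑ j, phi i j k * u i * v j

/-- Euclidean inner product on ℝ⁷. -/
def dot (u v : Fin 7 → ℝ) : ℝ := ∑ i, u i * v i

end

def phi0Z : Fin 7 → Fin 7 → Fin 7 → ℤ := fun i j k =>
  if (i, j, k) = (0, 1, 2) then -1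
  else if (i, j, k) = (0, 3, 4) then -1
  else if (i, j, k) = (0, 5, 6) then -1
  else if (i, j, k) = (1, 3, 5) then -1
  else if (i, j, k) = (1, 4, 6) then 1
  else if (i, j, k) = (2, 3, 6) then 1
  else if (i, j, k) = (2, 4, 5) then 1
  else 0

def phiZ (i j k : Fin 7) : ℤ :=
  ∑ σ : Equiv.Perm (Fin 3),
    (Equiv.Perm.sign σ : ℤ) *
      phi0Z (![i, j, k] (σ 0)) (![i, j, k] (σ 1)) (![i, j, k] (σ 2))

/-- The six-term expansion of `phiZ`. -/
def phiE (i j k : Fin 7) : ℤ :=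
  phi0Z i j k + phi0Z j k i + phi0Z k i j - phi0Z j i k - phi0Z i k j - phi0Z k j i

theorem phi0_cast (i j k : Fin 7) : phi0 i j k = (phi0Z i j k : ℝ) := by
  unfold phi0 phi0Z
  push_cast
  rfl

theorem phiZ_eq : ∀ i j k : Fin 7, phiZ i j k = phiE i j k := by
  decide +kernel

theorem phi_cast (i j k : Fin 7) : phi i j k = (phiE i j k : ℝ) := by
  rw [← phiZ_eq]
  unfold phi phiZ
  push_cast
  simp only [phi0_cast]

theorem phiE_contract : ∀ j k n m : Fin 7,
    (∑ i, (phiE n i j * phiE m k i + phiE m i j * phiE n k i)) =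
      (if j = m then 1 else 0) * (if k = n then 1 else 0)
      + (if j = n then 1 else 0) * (if k = m then 1 else 0)
      - 2 * ((if j = k then 1 else 0) * (if n = m then 1 else 0)) := by
  decide +kernel

theorem phi_contract (j k n m : Fin 7) :
    (∑ i, (phi n i j * phi m k i + phi m i j * phi n k i)) =
      (if j = m then 1 else 0) * (if k = n then 1 else 0)
      + (if j = n then 1 else 0) * (if k = m then 1 else 0)
      - 2 * ((if j = k then 1 else 0) * (if n = m then (1 : ℝ) else 0)) := by
  have h := congrArg (Int.cast : ℤ → ℝ) (phiE_contract j k n m)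
  push_cast at h
  simp only [phi_cast]
  exact h

/-- Remark `ricciflatrmk2`: a curvature tensor lying in Sym²(Ω²₇), i.e.
`R_{ijkl} = A_{nm} φ_{nij} φ_{mkl}` with A symmetric, has Ricci contraction
`Σ_i R_{ijki} = A_{jk} − tr(A) δ_{jk}`; if the Ricci contraction vanishes then
A = 0 and R ≡ 0. -/
theorem sym2_omega27_curvature (A : Fin 7 → Fin 7 → ℝ)
    (hA : ∀ i j, A j i = A i j)
    (R : Fin 7 → Fin 7 → Fin 7 → Fin 7 → ℝ)
    (hR : ∀ i j k l, R i j k l = ∑ n, ∑ m, A n m * phi n i j * phi m k l) :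
    (∀ j k : Fin 7, (∑ i, R i j k i) = A j k - (∑ n, A n n) * kdelta j k) ∧
    ((∀ j k : Fin 7, (∑ i, R i j k i) = 0) →
      (∀ j k, A j k = 0) ∧ (∀ i j k l, R i j k l = 0)) := by
  have h1 : ∀ j k : Fin 7, (∑ i, R i j k i) = A j k - (∑ n, A n n) * kdelta j k := by
    intro j k
    have e1 : (∑ i, R i j k i) = ∑ n, ∑ m, A n m * ∑ i, phi n i j * phi m k i := by
      simp only [hR, mul_assoc, Finset.mul_sum]
      rw [Finset.sum_comm]
      refine Finset.sum_congr rfl fun n _ => ?_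
      rw [Finset.sum_comm]
    have e2 : (∑ i, R i j k i) = ∑ n, ∑ m, A n m * ∑ i, phi m i j * phi n k i := by
      rw [e1, Finset.sum_comm]
      refine Finset.sum_congr rfl fun n _ => Finset.sum_congr rfl fun m _ => ?_
      rw [hA]
    have e3 : 2 * (∑ i, R i j k i) = ∑ n, ∑ m, A n m *
        ∑ i, (phi n i j * phi m k i + phi m i j * phi n k i) := by
      rw [two_mul]
      nth_rewrite 1 [e1]
      rw [e2]
      simp only [Finset.sum_add_distrib, mul_add]
    have e4 : (∑ n, ∑ m, A n m *
        ∑ i, (phi n i j * phi m k i + phi m i j * phi n k i)) =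
        A k j + A j k - 2 * ((∑ n, A n n) * kdelta j k) := by
      simp only [phi_contract]
      simp only [mul_add, mul_sub, Finset.sum_add_distrib,
        Finset.sum_sub_distrib]
      congr 1
      · congr 1 <;> simp
      · unfold kdelta
        by_cases h : j = k <;> simp [h, Finset.mul_sum, mul_comm]
    rw [e4, hA] at e3
    linarith
  refine ⟨h1, fun h0 => ?_⟩
  have ht : (∑ n, A n n) = 0 := by
    have hs : ∀ n, A n n = ∑ m, A m m := by
      intro n
      have := h1 n n
      rw [h0] at this
      simp only [kdelta, if_true] at this
      linarith
    have h7 : (∑ n, A n n) = ∑ _n : Fin 7, ∑ m, A m m :=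
      Finset.sum_congr rfl fun n _ => hs n
    rw [Finset.sum_const, Finset.card_univ, Fintype.card_fin, nsmul_eq_mul] at h7
    push_cast at h7
    linarith
  have hz : ∀ j k, A j k = 0 := by
    intro j k
    have := h1 j k
    rw [h0, ht] at this
    linarith
  refine ⟨hz, fun i j k l => ?_⟩
  rw [hR]
  simp [hz]
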